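/- At every point of U, (∂₁a)(∂₁R) + (∂₂a)(∂₂R) = a ( (∂₂a)(∂₁T) − (∂₁a)(∂₂T) ). -/

import Mathlib

/-- Partial derivative in direction `i` of a function on `ℝ²`. -/
noncomputable def pd (i : Fin 2) (f : EuclideanSpace ℝ (Fin 2) → ℝ)
    (x : EuclideanSpace ℝ (Fin 2)) : ℝ :=
  fderiv ℝ f x (EuclideanSpace.single i 1)

/-! In polar coordinates `T = ∂_θ u` and `R = a r ∂_r u`, so that for radial `a` the equation
`div (a ∇u) = 0` reads `r ∂_r R + a ∂_θ T = 0`; since `∇a` is radial too, multiplying by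
`∂_r a / r` gives the claim. The argument is carried out in Cartesian coordinates, where the origin
is not special: the two sides of the claim differ by a combination of `div (a ∇u)` and `∂_θ a`.
The derivatives of `T` and `R` come from commuting `∂ᵢ` with the derivatives along the linear
vector fields `x ↦ J x` and `x ↦ x`. -/

section SecondDerivative

variable {E F : Type*} [NormedAddCommGroup E] [NormedSpace ℝ E] [NormedAddCommGroup F]
  [NormedSpace ℝ F] {f : E → F} {x : E}

theorem differentiableAt_fderiv_of_contDiffAt_two (hf : ContDiffAt ℝ 2 f x) :
    DifferentiableAt ℝ (fderiv ℝ f) x :=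
  (hf.fderiv_right (m := 1) one_add_one_eq_two.le).differentiableAt one_ne_zero

theorem fderiv_fderiv_apply_comm (hf : ContDiffAt ℝ 2 f x) (v w : E) :
    fderiv ℝ (fun y => fderiv ℝ f y v) x w = fderiv ℝ (fun y => fderiv ℝ f y w) x v := by
  have hf' := differentiableAt_fderiv_of_contDiffAt_two hf
  have hsymm : IsSymmSndFDerivAt ℝ f x := hf.isSymmSndFDerivAt (by simp)
  simpa [fderiv_clm_apply hf' (differentiableAt_const _)] using hsymm w v

theorem fderiv_fderiv_apply_clm (hf : ContDiffAt ℝ 2 f x) (A : E →L[ℝ] E) (v : E) :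
    fderiv ℝ (fun y => fderiv ℝ f y (A y)) x v
      = fderiv ℝ (fun y => fderiv ℝ f y v) x (A x) + fderiv ℝ f x (A v) := by
  have hf' := differentiableAt_fderiv_of_contDiffAt_two hf
  rw [fderiv_fderiv_apply_comm hf]
  simp [fderiv_clm_apply hf' A.differentiableAt, fderiv_clm_apply hf' (differentiableAt_const _),
    add_comm]

end SecondDerivative

/-- The rotation `J (x₀, x₁) = (-x₁, x₀)` of the plane by a right angle. -/
noncomputable def planeRotation : EuclideanSpace ℝ (Fin 2) →L[ℝ] EuclideanSpace ℝ (Fin 2) :=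
  (EuclideanSpace.proj 0).smulRight (EuclideanSpace.single 1 1)
    - (EuclideanSpace.proj 1).smulRight (EuclideanSpace.single 0 1)

/-- The angular derivative `∂_θ f`, the derivative of `f` along the rotation field `x ↦ J x`. -/
noncomputable def angularDeriv (f : EuclideanSpace ℝ (Fin 2) → ℝ)
    (x : EuclideanSpace ℝ (Fin 2)) : ℝ :=
  fderiv ℝ f x (planeRotation x)

/-- The Euler derivative `x · ∇f = r ∂_r f`, the derivative of `f` along the field `x ↦ x`. -/
noncomputable def eulerDeriv (f : EuclideanSpace ℝ (Fin 2) → ℝ)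
    (x : EuclideanSpace ℝ (Fin 2)) : ℝ :=
  fderiv ℝ f x x

section Plane

variable {a f g u : EuclideanSpace ℝ (Fin 2) → ℝ} {x : EuclideanSpace ℝ (Fin 2)}

theorem planeRotation_apply (x : EuclideanSpace ℝ (Fin 2)) :
    planeRotation x = x 0 • EuclideanSpace.single 1 1 - x 1 • EuclideanSpace.single 0 1 :=
  rfl

theorem planeRotation_single_zero :
    planeRotation (EuclideanSpace.single 0 1) = EuclideanSpace.single 1 1 := by
  simp [planeRotation_apply]

theorem planeRotation_single_one :
    planeRotation (EuclideanSpace.single 1 1) = -EuclideanSpace.single 0 1 := by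
  simp [planeRotation_apply]

theorem angularDeriv_eq_pd (f : EuclideanSpace ℝ (Fin 2) → ℝ) (x : EuclideanSpace ℝ (Fin 2)) :
    angularDeriv f x = -(x 1) * pd 0 f x + x 0 * pd 1 f x := by
  simp only [angularDeriv, planeRotation_apply, pd, map_sub, map_smul, smul_eq_mul]
  ring

theorem eulerDeriv_eq_pd (f : EuclideanSpace ℝ (Fin 2) → ℝ) (x : EuclideanSpace ℝ (Fin 2)) :
    eulerDeriv f x = x 0 * pd 0 f x + x 1 * pd 1 f x := by
  have hx : x = x 0 • EuclideanSpace.single 0 1 + x 1 • EuclideanSpace.single 1 1 := by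
    ext i
    fin_cases i <;> simp
  calc eulerDeriv f x
      = fderiv ℝ f x (x 0 • EuclideanSpace.single 0 1 + x 1 • EuclideanSpace.single 1 1) :=
        congrArg (fderiv ℝ f x) hx
    _ = x 0 * pd 0 f x + x 1 * pd 1 f x := by simp only [map_add, map_smul, smul_eq_mul, pd]

theorem pd_mul (i : Fin 2) (hf : DifferentiableAt ℝ f x) (hg : DifferentiableAt ℝ g x) :
    pd i (fun y => f y * g y) x = f x * pd i g x + g x * pd i f x := by
  simp [pd, fderiv_fun_mul hf hg]

theorem pd_comm (hu : ContDiffAt ℝ 2 u x) (i j : Fin 2) :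
    pd i (pd j u) x = pd j (pd i u) x :=
  fderiv_fderiv_apply_comm hu _ _

theorem pd_zero_angularDeriv (hu : ContDiffAt ℝ 2 u x) :
    pd 0 (angularDeriv u) x = angularDeriv (pd 0 u) x + pd 1 u x :=
  (fderiv_fderiv_apply_clm hu planeRotation _).trans <| by
    rw [planeRotation_single_zero]; rfl

theorem pd_one_angularDeriv (hu : ContDiffAt ℝ 2 u x) :
    pd 1 (angularDeriv u) x = angularDeriv (pd 1 u) x - pd 0 u x :=
  (fderiv_fderiv_apply_clm hu planeRotation _).trans <| by
    rw [planeRotation_single_one, map_neg, ← sub_eq_add_neg]; rfl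

theorem differentiableAt_eulerDeriv (hu : ContDiffAt ℝ 2 u x) :
    DifferentiableAt ℝ (eulerDeriv u) x :=
  (differentiableAt_fderiv_of_contDiffAt_two hu).clm_apply differentiableAt_id

theorem pd_eulerDeriv (hu : ContDiffAt ℝ 2 u x) (i : Fin 2) :
    pd i (eulerDeriv u) x = eulerDeriv (pd i u) x + pd i u x :=
  fderiv_fderiv_apply_clm hu (.id ℝ _) _

theorem pd_mul_eulerDeriv (ha : DifferentiableAt ℝ a x) (hu : ContDiffAt ℝ 2 u x) (i : Fin 2) :
    pd i (fun y => a y * eulerDeriv u y) x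
      = a x * (eulerDeriv (pd i u) x + pd i u x) + eulerDeriv u x * pd i a x := by
  rw [pd_mul i ha (differentiableAt_eulerDeriv hu), pd_eulerDeriv hu]

theorem eulerDeriv_mul_laplacian (a : EuclideanSpace ℝ (Fin 2) → ℝ) (hu : ContDiffAt ℝ 2 u x) :
    eulerDeriv a x * (pd 0 (pd 0 u) x + pd 1 (pd 1 u) x)
      = pd 0 a x * eulerDeriv (pd 0 u) x + pd 1 a x * eulerDeriv (pd 1 u) x
        + (pd 0 a x * angularDeriv (pd 1 u) x - pd 1 a x * angularDeriv (pd 0 u) x) := by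
  simp only [eulerDeriv_eq_pd, angularDeriv_eq_pd, pd_comm hu 1 0]
  ring

theorem grad_sq_mul_eulerDeriv (a u : EuclideanSpace ℝ (Fin 2) → ℝ)
    (x : EuclideanSpace ℝ (Fin 2)) :
    (pd 0 a x ^ 2 + pd 1 a x ^ 2) * eulerDeriv u x
      = eulerDeriv a x * (pd 0 a x * pd 0 u x + pd 1 a x * pd 1 u x)
        + angularDeriv a x * (pd 1 a x * pd 0 u x - pd 0 a x * pd 1 u x) := by
  simp only [eulerDeriv_eq_pd, angularDeriv_eq_pd]
  ring

theorem grad_inner_grad_mul_eulerDeriv (ha : DifferentiableAt ℝ a x) (hu : ContDiffAt ℝ 2 u x) :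
    pd 0 a x * pd 0 (fun y => a y * eulerDeriv u y) x
        + pd 1 a x * pd 1 (fun y => a y * eulerDeriv u y) x
      = a x * (pd 1 a x * pd 0 (angularDeriv u) x - pd 0 a x * pd 1 (angularDeriv u) x)
        + eulerDeriv a x * (a x * (pd 0 (pd 0 u) x + pd 1 (pd 1 u) x)
          + (pd 0 a x * pd 0 u x + pd 1 a x * pd 1 u x))
        + angularDeriv a x * (pd 1 a x * pd 0 u x - pd 0 a x * pd 1 u x) := by
  rw [pd_mul_eulerDeriv ha hu, pd_mul_eulerDeriv ha hu, pd_zero_angularDeriv hu,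
    pd_one_angularDeriv hu]
  linear_combination grad_sq_mul_eulerDeriv a u x - a x * eulerDeriv_mul_laplacian a hu

theorem stmt4_general (ha : DifferentiableAt ℝ a x) (hu : ContDiffAt ℝ 2 u x)
    (hrad : -(x 1) * pd 0 a x + x 0 * pd 1 a x = 0)
    (heq : a x * (pd 0 (pd 0 u) x + pd 1 (pd 1 u) x)
      + (pd 0 a x * pd 0 u x + pd 1 a x * pd 1 u x) = 0)
    {T R : EuclideanSpace ℝ (Fin 2) → ℝ}
    (hT : ∀ y, T y = -(y 1) * pd 0 u y + y 0 * pd 1 u y)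
    (hR : ∀ y, R y = a y * (y 0 * pd 0 u y + y 1 * pd 1 u y)) :
    pd 0 a x * pd 0 R x + pd 1 a x * pd 1 R x
      = a x * (pd 1 a x * pd 0 T x - pd 0 a x * pd 1 T x) := by
  simp only [← angularDeriv_eq_pd, ← eulerDeriv_eq_pd] at hrad hT hR
  obtain rfl : T = angularDeriv u := funext hT
  obtain rfl : R = fun y => a y * eulerDeriv u y := funext hR
  simpa only [hrad, heq, mul_zero, zero_mul, add_zero] using grad_inner_grad_mul_eulerDeriv ha hu

end Plane

/-- Lemma 3.2, first identity: `a₁ R₁ + a₂ R₂ = a (a₂ T₁ − a₁ T₂)` on `U`. -/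
theorem stmt4 (U : Set (EuclideanSpace ℝ (Fin 2))) (hU : IsOpen U)
    (a u : EuclideanSpace ℝ (Fin 2) → ℝ)
    (ha : ContDiffOn ℝ (⊤ : ℕ∞) a U) (hapos : ∀ x ∈ U, 0 < a x)
    (hrad : ∀ x ∈ U, -(x 1) * pd 0 a x + x 0 * pd 1 a x = 0)
    (hu : ContDiffOn ℝ (⊤ : ℕ∞) u U)
    (heq : ∀ x ∈ U, a x * (pd 0 (pd 0 u) x + pd 1 (pd 1 u) x)
      + (pd 0 a x * pd 0 u x + pd 1 a x * pd 1 u x) = 0)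
    (T R : EuclideanSpace ℝ (Fin 2) → ℝ)
    (hT : ∀ x, T x = -(x 1) * pd 0 u x + x 0 * pd 1 u x)
    (hR : ∀ x, R x = a x * (x 0 * pd 0 u x + x 1 * pd 1 u x)) :
    ∀ x ∈ U, pd 0 a x * pd 0 R x + pd 1 a x * pd 1 R x
      = a x * (pd 1 a x * pd 0 T x - pd 0 a x * pd 1 T x) :=
  fun x hx => stmt4_general ((ha.contDiffAt (hU.mem_nhds hx)).differentiableAt (by simp))
    ((hu.contDiffAt (hU.mem_nhds hx)).of_le (WithTop.coe_le_coe.2 le_top))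
    (hrad x hx) (heq x hx) hT hR
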